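/- Fix integers d ≥ 1, ℓ ≥ 0 and a real p ≥ 0, and let k(r) = Σ_{n ∈ ℤ, |n| ≥ 2} |n|^{-p} · Ψ( 2 |n|^{p+ℓ+d+1} (r − n) ) with Ψ the standard bump function. Then for every integer j with 0 ≤ j ≤ d + ℓ − 1, the moment integral ∫_ℝ |r|^j k(r) dr is finite; indeed it is bounded by a constant times Σ_{|n| ≥ 2} |n|^{j} · |n|^{-p} · |n|^{-(p+ℓ+d+1)} ≤ Σ_{|n| ≥ 2} |n|^{j - p - d - ℓ - 1} < ∞. Moreover k does not decay faster than r^{-p}: for every integer n with |n| ≥ 2 one has k(n) = |n|^{-p} e^{-1}, hence limsup_{r → ∞} r^p k(r) > 0. -/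

import Mathlib

open Filter

/-- The standard bump function `Ψ(r) = exp(−1/(1−r²))·1_{(−1,1)}(r)`. -/
noncomputable def stdBump (r : ℝ) : ℝ :=
  if r ∈ Set.Ioo (-1 : ℝ) 1 then Real.exp (-1 / (1 - r ^ 2)) else 0

/-- The spiky radial profile `k(r) = Σ_{|n|≥2} |n|^{-p} Ψ(2|n|^{p+ℓ+d+1}(r−n))`. -/
noncomputable def spikyProfile (d ℓ : ℕ) (p : ℝ) (r : ℝ) : ℝ :=
  ∑' n : {n : ℤ // 2 ≤ |n|},
    |((n : ℤ) : ℝ)| ^ (-p) *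
      stdBump (2 * |((n : ℤ) : ℝ)| ^ (p + ℓ + d + 1) * (r - ((n : ℤ) : ℝ)))

/-!
Since `p + ℓ + d + 1 ≥ 0`, the spike at `n` lives within `1/2` of `n`, so the spikes are disjoint
and the profile is a single spike near each integer `|n| ≥ 2`. On the `n`-th spike `|r|` is
comparable to `|n|`, hence `|r|^s` times the spike is `O(|n|^(s - p))` there. For `s = p` this
bounds `r^p k(r)`, which takes the value `e⁻¹` at every integer `n ≥ 2`; multiplying by the width
and summing over `n` bounds the `s`-th moment by a multiple of `∑ |n|^(s - p - (p + ℓ + d + 1))`.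
-/

open MeasureTheory

/-- The spike centred at `n`, with height of order `|n|^{-p}` and width `|n|^{-a}`. In the summands
of `spikyProfile` the two exponents are tied together by `a = p + ℓ + d + 1`. -/
noncomputable def spike (a p : ℝ) (n : ℤ) (r : ℝ) : ℝ :=
  |(n : ℝ)| ^ (-p) * stdBump (2 * |(n : ℝ)| ^ a * (r - n))

/-- The sum of the spikes at the integers `|n| ≥ 2`: the profile with height and width exponents
decoupled. -/
noncomputable def spikeSum (a p : ℝ) (r : ℝ) : ℝ :=
  ∑' n : {n : ℤ // 2 ≤ |n|}, spike a p n r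

theorem spikyProfile_eq_spikeSum (d ℓ : ℕ) (p : ℝ) :
    spikyProfile d ℓ p = spikeSum (p + ℓ + d + 1) p :=
  rfl

theorem stdBump_zero : stdBump 0 = Real.exp (-1) := by
  simp [stdBump]

theorem stdBump_nonneg (x : ℝ) : 0 ≤ stdBump x := by
  unfold stdBump
  split_ifs <;> positivity

theorem abs_lt_one_of_stdBump_ne_zero {x : ℝ} (h : stdBump x ≠ 0) : |x| < 1 := by
  contrapose! h
  exact if_neg fun hx => h.not_gt (abs_lt.2 hx)

theorem stdBump_le_exp_neg_one (x : ℝ) : stdBump x ≤ Real.exp (-1) := by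
  unfold stdBump
  split_ifs with hx
  · have hpos : 0 < 1 - x ^ 2 := sub_pos.2 ((sq_lt_one_iff_abs_lt_one x).2 (abs_lt.2 hx))
    rw [Real.exp_le_exp, div_le_iff₀ hpos]
    linarith [sq_nonneg x]
  · positivity

theorem measurable_stdBump : Measurable stdBump :=
  Measurable.ite measurableSet_Ioo (by fun_prop) measurable_const

theorem rpow_le_two_rpow_abs_mul {x y : ℝ} (hy : 0 < y) (hyx : y / 2 ≤ x) (hxy : x ≤ 2 * y)
    (s : ℝ) : x ^ s ≤ 2 ^ |s| * y ^ s := by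
  rcases le_total 0 s with hs | hs
  · calc x ^ s ≤ (2 * y) ^ s := Real.rpow_le_rpow (by linarith) hxy hs
      _ = 2 ^ |s| * y ^ s := by rw [Real.mul_rpow two_pos.le hy.le, abs_of_nonneg hs]
  · calc x ^ s ≤ (y / 2) ^ s := Real.rpow_le_rpow_of_nonpos (by linarith) hyx hs
      _ = 2 ^ |s| * y ^ s := by
        rw [Real.div_rpow hy.le two_pos.le, abs_of_nonpos hs, Real.rpow_neg two_pos.le]
        ring

section Spike

variable {a p r : ℝ} {n : ℤ}

theorem spike_nonneg (a p : ℝ) (n : ℤ) (r : ℝ) : 0 ≤ spike a p n r :=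
  mul_nonneg (by positivity) (stdBump_nonneg _)

theorem spike_le (a p : ℝ) (n : ℤ) (r : ℝ) :
    spike a p n r ≤ |(n : ℝ)| ^ (-p) * Real.exp (-1) :=
  mul_le_mul_of_nonneg_left (stdBump_le_exp_neg_one _) (by positivity)

theorem spike_center (a p : ℝ) (n : ℤ) : spike a p n n = |(n : ℝ)| ^ (-p) * Real.exp (-1) := by
  rw [spike, sub_self, mul_zero, stdBump_zero]

theorem measurable_spike (a p : ℝ) (n : ℤ) : Measurable (spike a p n) :=
  (measurable_stdBump.comp (by fun_prop)).const_mul _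

theorem one_le_abs_intCast (hn : n ≠ 0) : (1 : ℝ) ≤ |(n : ℝ)| :=
  mod_cast Int.one_le_abs hn

theorem abs_sub_lt_of_spike_ne_zero (hn : n ≠ 0) (h : spike a p n r ≠ 0) :
    |r - n| < |(n : ℝ)| ^ (-a) / 2 := by
  have hpos : 0 < |(n : ℝ)| ^ a := by positivity
  have hlt := abs_lt_one_of_stdBump_ne_zero (right_ne_zero_of_mul h)
  rw [abs_mul, abs_of_pos (by positivity)] at hlt
  rw [Real.rpow_neg (abs_nonneg _), lt_div_iff₀ two_pos, ← one_div, lt_div_iff₀ hpos]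
  linarith

theorem abs_sub_lt_half_of_spike_ne_zero (ha : 0 ≤ a) (hn : n ≠ 0) (h : spike a p n r ≠ 0) :
    |r - n| < 1 / 2 := by
  have hwidth : |(n : ℝ)| ^ (-a) ≤ 1 :=
    Real.rpow_le_one_of_one_le_of_nonpos (one_le_abs_intCast hn) (neg_nonpos.2 ha)
  linarith [abs_sub_lt_of_spike_ne_zero hn h]

theorem abs_rpow_mul_spike_le (ha : 0 ≤ a) (hn : n ≠ 0) (p s r : ℝ) :
    |r| ^ s * spike a p n r ≤ 2 ^ |s| * Real.exp (-1) * |(n : ℝ)| ^ (s - p) := by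
  by_cases h : spike a p n r = 0
  · rw [h, mul_zero]
    positivity
  have hn1 := one_le_abs_intCast hn
  have hnear := abs_sub_lt_half_of_spike_ne_zero ha hn h
  have hlower : |(n : ℝ)| / 2 ≤ |r| := by
    linarith [abs_sub_abs_le_abs_sub (n : ℝ) r, abs_sub_comm r n]
  have hupper : |r| ≤ 2 * |(n : ℝ)| := by
    linarith [abs_sub_abs_le_abs_sub r n]
  calc |r| ^ s * spike a p n r
      ≤ (2 ^ |s| * |(n : ℝ)| ^ s) * (|(n : ℝ)| ^ (-p) * Real.exp (-1)) :=
        mul_le_mul (rpow_le_two_rpow_abs_mul (by positivity) hlower hupper s) (spike_le a p n r)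
          (spike_nonneg a p n r) (by positivity)
    _ = 2 ^ |s| * Real.exp (-1) * |(n : ℝ)| ^ (s - p) := by
        rw [sub_eq_add_neg, Real.rpow_add (by positivity)]
        ring

theorem lintegral_abs_rpow_mul_spike_le (ha : 0 ≤ a) (hn : n ≠ 0) (p s : ℝ) :
    ∫⁻ r : ℝ, ‖|r| ^ s * spike a p n r‖ₑ ≤
      ENNReal.ofReal (2 ^ |s| * Real.exp (-1) * |(n : ℝ)| ^ (s - p - a)) := by
  set δ := |(n : ℝ)| ^ (-a) / 2 with hδ
  set M := 2 ^ |s| * Real.exp (-1) * |(n : ℝ)| ^ (s - p) with hM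
  have hbound (r : ℝ) : ‖|r| ^ s * spike a p n r‖ₑ ≤
      (Metric.ball (n : ℝ) δ).indicator (fun _ => ENNReal.ofReal M) r := by
    by_cases h : spike a p n r = 0
    · simp [h]
    rw [Set.indicator_of_mem (Metric.mem_ball.2 (abs_sub_lt_of_spike_ne_zero hn h)),
      Real.enorm_eq_ofReal (mul_nonneg (by positivity) (spike_nonneg a p n r))]
    exact ENNReal.ofReal_le_ofReal (abs_rpow_mul_spike_le ha hn p s r)
  calc ∫⁻ r : ℝ, ‖|r| ^ s * spike a p n r‖ₑ
      ≤ ENNReal.ofReal M * volume (Metric.ball (n : ℝ) δ) :=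
        (lintegral_mono hbound).trans_eq
          (lintegral_indicator_const Metric.isOpen_ball.measurableSet _)
    _ = ENNReal.ofReal (M * |(n : ℝ)| ^ (-a)) := by
        rw [Real.volume_ball, ← ENNReal.ofReal_mul (by positivity), hδ,
          mul_div_cancel₀ _ two_ne_zero]
    _ = ENNReal.ofReal (2 ^ |s| * Real.exp (-1) * |(n : ℝ)| ^ (s - p - a)) := by
        rw [hM, mul_assoc, ← Real.rpow_add (by positivity), ← sub_eq_add_neg]

end Spike

section SpikeSum

variable {a r : ℝ} {n : ℤ}

theorem ne_zero_of_two_le_abs (hn : 2 ≤ |n|) : n ≠ 0 :=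
  abs_pos.1 (two_pos.trans_le hn)

theorem spikeSum_eq_spike (ha : 0 ≤ a) (p : ℝ) (hn : 2 ≤ |n|) (hr : |r - n| < 1 / 2) :
    spikeSum a p r = spike a p n r := by
  refine tsum_eq_single (⟨n, hn⟩ : {n : ℤ // 2 ≤ |n|}) fun ⟨m, hm⟩ hmn => ?_
  by_contra h
  have hrm := abs_sub_lt_half_of_spike_ne_zero ha (ne_zero_of_two_le_abs hm) h
  have hlt : |(m : ℝ) - n| < 1 := by
    linarith [abs_sub_le (m : ℝ) r n, abs_sub_comm r m]
  exact hmn (Subtype.ext (sub_eq_zero.1 (Int.abs_lt_one_iff.1 (mod_cast hlt))))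

theorem spikeSum_intCast (ha : 0 ≤ a) (p : ℝ) (hn : 2 ≤ |n|) :
    spikeSum a p n = |(n : ℝ)| ^ (-p) * Real.exp (-1) := by
  rw [spikeSum_eq_spike ha p hn (by norm_num), spike_center]

theorem abs_rpow_mul_spikeSum_le (ha : 0 ≤ a) (p r : ℝ) :
    |r| ^ p * spikeSum a p r ≤ 2 ^ |p| * Real.exp (-1) := by
  by_cases h : ∃ n : {n : ℤ // 2 ≤ |n|}, spike a p n r ≠ 0
  · obtain ⟨⟨n, hn⟩, hne⟩ := h
    have hn0 := ne_zero_of_two_le_abs hn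
    rw [spikeSum_eq_spike ha p hn (abs_sub_lt_half_of_spike_ne_zero ha hn0 hne)]
    simpa using abs_rpow_mul_spike_le ha hn0 p p r
  · push Not at h
    rw [spikeSum, tsum_congr h, tsum_zero, mul_zero]
    positivity

theorem integrable_abs_rpow_mul_spikeSum (ha : 0 ≤ a) {p s : ℝ} (hs : s + 1 < p + a) :
    Integrable fun r : ℝ => |r| ^ s * spikeSum a p r := by
  have hmeas (n : {n : ℤ // 2 ≤ |n|}) : Measurable fun r : ℝ => |r| ^ s * spike a p n r :=
    (by fun_prop : Measurable fun r : ℝ => |r| ^ s).mul (measurable_spike a p n)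
  have hsummable : Summable fun n : {n : ℤ // 2 ≤ |n|} =>
      2 ^ |s| * Real.exp (-1) * |((n : ℤ) : ℝ)| ^ (s - p - a) := by
    have := Real.summable_abs_int_rpow (b := p + a - s) (by linarith)
    rw [show -(p + a - s) = s - p - a by ring] at this
    exact (this.subtype _).mul_left _
  simp only [spikeSum, ← tsum_mul_left]
  refine ⟨(Measurable.tsum hmeas).aestronglyMeasurable, ?_⟩
  calc ∫⁻ r : ℝ, ‖∑' n : {n : ℤ // 2 ≤ |n|}, |r| ^ s * spike a p n r‖ₑ
      ≤ ∫⁻ r : ℝ, ∑' n : {n : ℤ // 2 ≤ |n|}, ‖|r| ^ s * spike a p n r‖ₑ :=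
        lintegral_mono fun _ => enorm_tsum_le_tsum_enorm
    _ = ∑' n : {n : ℤ // 2 ≤ |n|}, ∫⁻ r : ℝ, ‖|r| ^ s * spike a p n r‖ₑ :=
        lintegral_tsum fun n => (hmeas n).enorm.aemeasurable
    _ ≤ ∑' n : {n : ℤ // 2 ≤ |n|},
          ENNReal.ofReal (2 ^ |s| * Real.exp (-1) * |((n : ℤ) : ℝ)| ^ (s - p - a)) :=
        ENNReal.tsum_le_tsum fun n =>
          lintegral_abs_rpow_mul_spike_le ha (ne_zero_of_two_le_abs n.2) p s
    _ < ⊤ := hsummable.tsum_ofReal_lt_top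

theorem exp_neg_one_le_limsup_rpow_mul_spikeSum (ha : 0 ≤ a) (p : ℝ) :
    Real.exp (-1) ≤ limsup (fun r : ℝ => r ^ p * spikeSum a p r) atTop := by
  have hfrequently : ∃ᶠ r : ℝ in atTop, Real.exp (-1) ≤ r ^ p * spikeSum a p r := by
    refine tendsto_natCast_atTop_atTop.frequently (Eventually.frequently ?_)
    filter_upwards [eventually_ge_atTop 2] with m hm
    have hvalue := spikeSum_intCast ha p (n := m) (by rw [Nat.abs_cast]; exact_mod_cast hm)
    rw [Int.cast_natCast, Nat.abs_cast] at hvalue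
    rw [hvalue, ← mul_assoc, ← Real.rpow_add (by positivity), add_neg_cancel, Real.rpow_zero,
      one_mul]
  -- On `ℝ` the `limsup` of an unbounded function is a junk value, so a bound from above is needed.
  have hbounded : IsBoundedUnder (· ≤ ·) atTop fun r : ℝ => r ^ p * spikeSum a p r := by
    refine isBoundedUnder_of_eventually_le (a := 2 ^ |p| * Real.exp (-1)) ?_
    filter_upwards [eventually_ge_atTop 0] with r hr
    simpa only [abs_of_nonneg hr] using abs_rpow_mul_spikeSum_le ha p r
  exact le_limsup_of_frequently_le hfrequently hbounded

end SpikeSum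

theorem spikyProfile_moments_and_no_fast_decay_general {a : ℝ} (ha : 0 ≤ a) (p : ℝ) :
    (∀ s : ℝ, s + 1 < p + a → Integrable fun r : ℝ => |r| ^ s * spikeSum a p r) ∧
    (∀ n : ℤ, 2 ≤ |n| → spikeSum a p n = |(n : ℝ)| ^ (-p) * Real.exp (-1)) ∧
    Real.exp (-1) ≤ limsup (fun r : ℝ => r ^ p * spikeSum a p r) atTop :=
  ⟨fun _ hs => integrable_abs_rpow_mul_spikeSum ha hs, fun _ hn => spikeSum_intCast ha p hn,
    exp_neg_one_le_limsup_rpow_mul_spikeSum ha p⟩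

/-- the spiky profile has finite moments up to order `d+ℓ−1`, attains
the value `|n|^{-p} e^{-1}` at every integer `|n| ≥ 2`, hence does not decay faster
than `r^{-p}`: `limsup_{r→∞} r^p k(r) > 0`. -/
theorem spikyProfile_moments_and_no_fast_decay (d ℓ : ℕ) (hd : 1 ≤ d)
    (p : ℝ) (hp : 0 ≤ p) :
    (∀ j : ℕ, j ≤ d + ℓ - 1 →
      MeasureTheory.Integrable (fun r : ℝ => |r| ^ j * spikyProfile d ℓ p r)) ∧
    (∀ n : ℤ, 2 ≤ |n| →
      spikyProfile d ℓ p (n : ℝ) = |(n : ℝ)| ^ (-p) * Real.exp (-1)) ∧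
    0 < Filter.limsup (fun r : ℝ => r ^ p * spikyProfile d ℓ p r) Filter.atTop := by
  have ha : 0 ≤ p + ℓ + d + 1 := by positivity
  obtain ⟨hmoments, hvalues, hlimsup⟩ := spikyProfile_moments_and_no_fast_decay_general ha p
  rw [spikyProfile_eq_spikeSum]
  refine ⟨fun j hj => ?_, hvalues, (Real.exp_pos _).trans_le hlimsup⟩
  have hj' : (j : ℝ) + 1 ≤ d + ℓ := mod_cast (by lia : j + 1 ≤ d + ℓ)
  simpa only [Real.rpow_natCast] using hmoments j (by linarith)
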